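/- Let F be a finite field with q elements of odd characteristic and let a, b, c, d ∈ Fˣ satisfy a ≠ b, c ≠ d, abcd = 1, and 1 ∈ {ac, ad, bc, bd}. Let C₁, C₂ be the conjugacy classes of diag(a,b) and diag(c,d) in GL₂(F), and let C₃ be the regular unipotent conjugacy class of GL₂(F). Then the number of triples (S₁, S₂, S₃) ∈ C₁ × C₂ × C₃ with S₁S₂S₃ = 1 equals 2(q³ − q); that is, such triples form exactly two orbits under simultaneous conjugation by GL₂(F). -/

import Mathlib

/-!
Moving `S₁` to `diag(a, b)` by conjugation, the number of triples is `|C₁|` times the number of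
pairs `(S₂, S₃) ∈ C₂ × C₃` with `diag(a, b) S₂ S₃ = 1`, and `|C₁| = |GL₂(F)| / (q - 1)²` since the
centralizer of `diag(a, b)` is the diagonal torus. The non-generic condition means that, up to
exchanging `a, b` or `c, d`, we have `ac = bd = 1`. Then `S₂ = diag(c, d) S₃⁻¹`, and comparing the
trace of this with `c + d` forces both diagonal entries of `S₃` to be `1`. So `S₃` is given by its
off-diagonal entries `s, t`, subject to `st = 0` and `(s, t) ≠ 0`, which leaves `2(q - 1)` pairs:
the two punctured axes are the two orbits of the torus.
-/

open MulAction Matrix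

theorem card_mem_orbit_and {G X Y : Type*} [Group G] [MulAction G X] [MulAction G Y]
    (x₀ : X) (P : X → Y → Prop) (hP : ∀ (g : G) x y, P x y → P (g • x) (g • y)) :
    Nat.card {p : X × Y // p.1 ∈ orbit G x₀ ∧ P p.1 p.2} =
      Nat.card (orbit G x₀) * Nat.card {y // P x₀ y} := by
  choose g hg using fun x : orbit G x₀ ↦ mem_orbit_iff.1 x.2
  have hg' (x : orbit G x₀) : (g x)⁻¹ • (x : X) = x₀ := by rw [inv_smul_eq_iff, hg x]
  rw [← Nat.card_prod]
  exact Nat.card_congr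
    { toFun p := ⟨⟨p.1.1, p.2.1⟩, (g ⟨p.1.1, p.2.1⟩)⁻¹ • p.1.2, by
        simpa only [hg'] using hP (g ⟨p.1.1, p.2.1⟩)⁻¹ _ _ p.2.2⟩
      invFun p := ⟨(p.1, g p.1 • p.2.1), p.1.2, by simpa only [hg] using hP (g p.1) _ _ p.2.2⟩
      left_inv p := by simp
      right_inv p := by simp }

theorem card_mul_eq_zero_and_ne_zero (R : Type*) [MulZeroClass R] [NoZeroDivisors R] [Finite R] :
    Nat.card {p : R × R | p.1 * p.2 = 0 ∧ p ≠ 0} = 2 * (Nat.card R - 1) := by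
  have haxes : {p : R × R | p.1 * p.2 = 0 ∧ p ≠ 0} =
      (fun y ↦ (0, y)) '' {0}ᶜ ∪ (fun x ↦ (x, 0)) '' {0}ᶜ := by
    ext ⟨x, y⟩
    constructor
    · rintro ⟨hxy, hne⟩
      rcases mul_eq_zero.1 hxy with rfl | rfl
      · exact .inl ⟨y, fun hy ↦ hne (Prod.mk_eq_zero.2 ⟨rfl, hy⟩), rfl⟩
      · exact .inr ⟨x, fun hx ↦ hne (Prod.mk_eq_zero.2 ⟨hx, rfl⟩), rfl⟩
    · rintro (⟨z, hz, h⟩ | ⟨z, hz, h⟩) <;> obtain ⟨rfl, rfl⟩ := Prod.mk.inj h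
      · exact ⟨zero_mul z, fun h0 ↦ hz (Prod.mk_eq_zero.1 h0).2⟩
      · exact ⟨mul_zero z, fun h0 ↦ hz (Prod.mk_eq_zero.1 h0).1⟩
  have hdisj : Disjoint ((fun y : R ↦ ((0 : R), y)) '' {0}ᶜ) ((fun x ↦ (x, 0)) '' {0}ᶜ) := by
    rw [Set.disjoint_left]
    rintro _ ⟨y, -, rfl⟩ ⟨x, hx, h⟩
    exact hx (Prod.mk.inj h).1
  rw [Nat.card_coe_set_eq, haxes, Set.ncard_union_eq hdisj,
    Set.ncard_image_of_injective _ (Prod.mk_right_injective 0),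
    Set.ncard_image_of_injective _ (Prod.mk_left_injective 0),
    Set.ncard_compl, Set.ncard_singleton, two_mul]

section Monoid

variable {M : Type*} [Monoid M]

theorem isConj_units_smul (g : ConjAct Mˣ) (a : M) : IsConj a (g • a) :=
  ⟨ConjAct.ofConjAct g, (ConjAct.ofConjAct g).mk_semiconjBy a⟩

theorem isConj_iff_mem_orbit_conjAct {a b : M} : IsConj a b ↔ b ∈ orbit (ConjAct Mˣ) a := by
  refine ⟨fun ⟨u, hu⟩ ↦ ⟨ConjAct.toConjAct u, ?_⟩, ?_⟩
  · simp only [ConjAct.units_smul_def, ConjAct.ofConjAct_toConjAct, hu.eq,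
      Units.mul_inv_cancel_right]
  · rintro ⟨g, rfl⟩
    exact isConj_units_smul g a

/-- The triples in the product of the conjugacy classes of `a`, `b`, `c` whose product is `1`. For
matrices these are the representations of the fundamental group of the thrice-punctured sphere with
prescribed local monodromies. Conjugation is by units of the monoid, so no invertibility of the
entries has to be imposed. -/
def conjTriples (a b c : M) : Set (M × M × M) :=
  {x | IsConj a x.1 ∧ IsConj b x.2.1 ∧ IsConj c x.2.2 ∧ x.1 * x.2.1 * x.2.2 = 1}

theorem conjTriples_congr {a a' b b' : M} (ha : IsConj a a') (hb : IsConj b b') (c : M) :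
    conjTriples a b c = conjTriples a' b' c := by
  have isConj_congr {m m' : M} (h : IsConj m m') (x : M) : IsConj m x ↔ IsConj m' x :=
    ⟨h.symm.trans, h.trans⟩
  simp only [conjTriples, isConj_congr ha, isConj_congr hb]

theorem card_conjTriples (a b c : M) :
    Nat.card (conjTriples a b c) = Nat.card {x // IsConj a x} *
      Nat.card {y : M × M // IsConj b y.1 ∧ IsConj c y.2 ∧ a * y.1 * y.2 = 1} := by
  simp only [isConj_iff_mem_orbit_conjAct (a := a)]
  refine (Nat.card_congr (Equiv.subtypeEquivRight fun x ↦ ?_)).trans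
    (card_mem_orbit_and (G := ConjAct Mˣ) a
      (fun x (y : M × M) ↦ IsConj b y.1 ∧ IsConj c y.2 ∧ x * y.1 * y.2 = 1) ?_)
  · rw [← isConj_iff_mem_orbit_conjAct]
    rfl
  · rintro g x ⟨y, z⟩ ⟨hy, hz, hxyz⟩
    refine ⟨hy.trans (isConj_units_smul g y), hz.trans (isConj_units_smul g z), ?_⟩
    simp only [Prod.smul_mk, ← smul_mul', hxyz, smul_one]

theorem card_isConj_mul_card_commute (a : M) :
    Nat.card {x // IsConj a x} * Nat.card {u : Mˣ // Commute u.val a} = Nat.card Mˣ := by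
  have hstab : Nat.card {u : Mˣ // Commute u.val a} = Nat.card (stabilizer (ConjAct Mˣ) a) :=
    Nat.card_congr <| ConjAct.toConjAct.toEquiv.subtypeEquiv fun u ↦
      (Units.mul_inv_eq_iff_eq_mul u).symm
  have horbit : Nat.card {x // IsConj a x} = (stabilizer (ConjAct Mˣ) a).index := by
    simp only [index_stabilizer, isConj_iff_mem_orbit_conjAct]
    rfl
  rw [hstab, horbit, mul_comm, Subgroup.card_mul_index]
  rfl

end Monoid

section CommRing

variable {n R : Type*} [Fintype n] [DecidableEq n] [CommRing R]

theorem trace_eq_and_det_eq_of_isConj {A B : Matrix n n R} (h : IsConj A B) :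
    B.trace = A.trace ∧ B.det = A.det := by
  obtain ⟨u, rfl⟩ := isConj_iff_mem_orbit_conjAct.1 h
  exact ⟨trace_units_conj _ A, det_units_conj _ A⟩

theorem isConj_scalar_iff {r : R} {A : Matrix n n R} :
    IsConj (scalar n r) A ↔ scalar n r = A := by
  refine ⟨fun ⟨u, hu⟩ ↦ u.mul_left_inj.1 ?_, fun h ↦ h ▸ IsConj.refl _⟩
  rw [← hu.eq, (scalar_commute r (Commute.all r) u.val).eq]

theorem mul_mul_eq_one_iff_eq_mul_adjugate {A B C D : Matrix n n R} (hAB : A * B = 1)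
    (hD : D.det = 1) : A * C * D = 1 ↔ C = B * D.adjugate := by
  have hadj : D * D.adjugate = 1 := by rw [mul_adjugate, hD, one_smul]
  constructor
  · intro h
    calc
      C = B * A * C * (D * D.adjugate) := by rw [mul_eq_one_comm.1 hAB, hadj, one_mul, mul_one]
      _ = B * (A * C * D) * D.adjugate := by simp only [mul_assoc]
      _ = B * D.adjugate := by rw [h, mul_one]
  · rintro rfl
    rw [← mul_assoc, hAB, one_mul, mul_eq_one_comm.1 hadj]

end CommRing

section Diagonal

variable {n R : Type*} [Fintype n] [DecidableEq n]

theorem commute_diagonal_iff [CommRing R] [NoZeroDivisors R] {v : n → R} (hv : v.Injective)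
    {A : Matrix n n R} : Commute A (diagonal v) ↔ diagonal A.diag = A := by
  refine ⟨fun h ↦ ?_, fun h ↦ ?_⟩
  · rw [← isDiag_iff_diagonal_diag]
    intro i j hij
    have hmul : A i j * v j = v i * A i j := by
      simpa only [mul_diagonal, diagonal_mul] using congrFun₂ h.eq i j
    have hsub : (v i - v j) * A i j = 0 := by linear_combination -hmul
    exact (mul_eq_zero.1 hsub).resolve_left (sub_ne_zero.2 (hv.ne hij))
  · rw [← h]
    exact commute_diagonal _ _

/-- Invertible vectors as diagonal matrices: the diagonal torus of `GL n R`. -/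
def diagonalUnits (n R : Type*) [Fintype n] [DecidableEq n] [CommRing R] : (n → R)ˣ →* GL n R :=
  Units.map (diagonalRingHom n R).toMonoidHom

theorem diagonalUnits_injective [CommRing R] : Function.Injective (diagonalUnits n R) :=
  Units.map_injective diagonal_injective

theorem range_diagonalUnits [CommRing R] [NoZeroDivisors R] {v : n → R} (hv : v.Injective) :
    Set.range (diagonalUnits n R) = {g | Commute g.val (diagonal v)} := by
  ext g
  refine ⟨?_, fun hg ↦ ?_⟩
  · rintro ⟨w, rfl⟩
    exact commute_diagonal _ _
  · have hd := (commute_diagonal_iff hv).1 hg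
    have hd' := (commute_diagonal_iff hv).1 hg.units_inv_left
    refine ⟨⟨g.val.diag, g⁻¹.val.diag, ?_, ?_⟩, Units.ext hd⟩ <;>
    · apply diagonal_injective
      simp only [Pi.mul_def, ← diagonal_mul_diagonal, hd, hd', Units.mul_inv, Units.inv_mul]
      exact diagonal_one.symm

theorem card_isConj_diagonal_mul {F : Type*} [Field F] {v : n → F} (hv : v.Injective) :
    Nat.card {A // IsConj (diagonal v) A} * (Nat.card F - 1) ^ Fintype.card n =
      Nat.card (GL n F) := by
  have hcomm := calc Nat.card {g : GL n F // Commute g.val (diagonal v)}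
    _ = Nat.card (Set.range (diagonalUnits n F)) := by
      rw [range_diagonalUnits hv]
      rfl
    _ = Nat.card (n → Fˣ) := (Nat.card_range_of_injective diagonalUnits_injective).trans
      (Nat.card_congr MulEquiv.piUnits.toEquiv)
    _ = (Nat.card F - 1) ^ Fintype.card n := by
      rw [Nat.card_fun, Nat.card_units, Nat.card_eq_fintype_card (α := n)]
  rw [← hcomm, card_isConj_mul_card_commute]

end Diagonal

section FinTwo

theorem mem_range_scalar_fin_two {R : Type*} [Semiring R] {A : Matrix (Fin 2) (Fin 2) R} :
    A ∈ Set.range (scalar (Fin 2)) ↔ A 0 1 = 0 ∧ A 1 0 = 0 ∧ A 0 0 = A 1 1 := by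
  constructor
  · rintro ⟨r, rfl⟩
    simp
  · rintro ⟨h01, h10, h⟩
    refine ⟨A 0 0, ?_⟩
    rw [eta_fin_two A, h01, h10, ← h]
    simp [scalar_apply, diagonal_fin_two]

theorem exists_det_vec_mulVec_ne_zero {R : Type*} [CommRing R] {A : Matrix (Fin 2) (Fin 2) R}
    (hA : A ∉ Set.range (scalar (Fin 2))) : ∃ v, (of ![v, A *ᵥ v]).det ≠ 0 := by
  contrapose! hA
  have h (x y : R) : x * (A 1 0 * x + A 1 1 * y) - y * (A 0 0 * x + A 0 1 * y) = 0 := by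
    simpa [det_fin_two, vec2_dotProduct, mulVec, mul_comm] using hA ![x, y]
  rw [mem_range_scalar_fin_two]
  refine ⟨by linear_combination -h 0 1, by linear_combination h 1 0, ?_⟩
  linear_combination h 1 0 + h 0 1 - h 1 1

theorem isConj_diagonal_swap {R : Type*} [CommRing R] (a b : R) :
    IsConj (diagonal ![a, b]) (diagonal ![b, a]) := by
  have hsq : !![0, 1; 1, 0] * !![0, 1; 1, 0] = (1 : Matrix (Fin 2) (Fin 2) R) := by
    simp [one_fin_two]
  refine ⟨⟨!![0, 1; 1, 0], !![0, 1; 1, 0], hsq, hsq⟩, ?_⟩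
  simp [SemiconjBy, diagonal_fin_two]

variable {F : Type*} [Field F] {A B : Matrix (Fin 2) (Fin 2) F}

theorem isConj_companion (hA : A ∉ Set.range (scalar (Fin 2))) :
    IsConj !![0, -A.det; 1, A.trace] A := by
  obtain ⟨v, hv⟩ := exists_det_vec_mulVec_ne_zero hA
  refine ⟨GeneralLinearGroup.mkOfDetNeZero (of ![v, A *ᵥ v])ᵀ (by rwa [det_transpose]), ?_⟩
  -- In the basis `v, A v` this is the Cayley–Hamilton theorem.
  ext i j
  fin_cases i <;> fin_cases j <;>
    simp [GeneralLinearGroup.mkOfDetNeZero, mul_apply, det_fin_two, trace_fin_two] <;>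
    ring

theorem isConj_iff_trace_det (hA : A ∉ Set.range (scalar (Fin 2))) :
    IsConj A B ↔ B ∉ Set.range (scalar (Fin 2)) ∧ B.trace = A.trace ∧ B.det = A.det := by
  refine ⟨fun h ↦ ⟨?_, trace_eq_and_det_eq_of_isConj h⟩, fun ⟨hB, htr, hdet⟩ ↦ ?_⟩
  · rintro ⟨r, rfl⟩
    exact hA ⟨r, isConj_scalar_iff.1 h.symm⟩
  · have hA' := isConj_companion hA
    rw [← htr, ← hdet] at hA'
    exact hA'.symm.trans (isConj_companion hB)

theorem isConj_diagonal_fin_two_iff {a b : F} (hab : a ≠ b) :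
    IsConj (diagonal ![a, b]) A ↔ A.trace = a + b ∧ A.det = a * b := by
  have hdiag : diagonal ![a, b] ∉ Set.range (scalar (Fin 2)) := by
    rw [mem_range_scalar_fin_two]
    simp [hab]
  have hscalar : A.trace = a + b ∧ A.det = a * b → A ∉ Set.range (scalar (Fin 2)) := by
    rintro ⟨htr, hdet⟩ hA
    obtain ⟨h01, h10, h⟩ := mem_range_scalar_fin_two.1 hA
    rw [trace_fin_two, h] at htr
    rw [det_fin_two, h, h01, h10] at hdet
    have hsq : (a - b) ^ 2 = 0 := by
      linear_combination 4 * hdet - (a + b + 2 * A 1 1) * htr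
    exact hab (sub_eq_zero.1 (pow_eq_zero_iff two_ne_zero |>.1 hsq))
  rw [isConj_iff_trace_det hdiag, trace_diagonal, det_diagonal, Fin.sum_univ_two,
    Fin.prod_univ_two]
  exact and_iff_right_of_imp hscalar

theorem isConj_unipotent_iff :
    IsConj !![1, 1; 0, 1] A ↔ A ∉ Set.range (scalar (Fin 2)) ∧ A.trace = 2 ∧ A.det = 1 := by
  have hscalar : !![1, 1; 0, 1] ∉ Set.range (scalar (Fin 2) : F →+* _) := by
    rw [mem_range_scalar_fin_two]
    simp
  rw [isConj_iff_trace_det hscalar]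
  simp [trace_fin_two, one_add_one_eq_two]

theorem isConj_unipotent_and_trace_iff {c d : F} (hcd : c ≠ d) :
    IsConj !![1, 1; 0, 1] A ∧ (diagonal ![c, d] * A.adjugate).trace = c + d ↔
      ∃ p : F × F, (p.1 * p.2 = 0 ∧ p ≠ 0) ∧ A = !![1, p.1; p.2, 1] := by
  have htrace : (diagonal ![c, d] * A.adjugate).trace = c * A 1 1 + d * A 0 0 := by
    simp [trace_fin_two, adjugate_fin_two]
  rw [isConj_unipotent_iff, htrace, mem_range_scalar_fin_two, trace_fin_two, det_fin_two]
  constructor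
  · rintro ⟨⟨hscalar, htr, hdet⟩, hcdtr⟩
    have h00 : A 0 0 = 1 :=
      mul_left_cancel₀ (sub_ne_zero.2 hcd) (by linear_combination c * htr - hcdtr)
    have h11 : A 1 1 = 1 := by linear_combination htr - h00
    rw [h00, h11] at hdet
    refine ⟨(A 0 1, A 1 0), ⟨by linear_combination -hdet, fun h0 ↦ ?_⟩, ?_⟩
    · obtain ⟨h01, h10⟩ := Prod.mk_eq_zero.1 h0
      exact hscalar ⟨h01, h10, h00.trans h11.symm⟩
    · exact (eta_fin_two A).trans (by rw [h00, h11])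
  · rintro ⟨⟨s, t⟩, ⟨hst, hne⟩, rfl⟩
    simpa [hst, one_add_one_eq_two] using hne

theorem isConj_pairs_eq_image {a b c d : F} (hcd : c ≠ d) (hac : a * c = 1) (hbd : b * d = 1) :
    {y : Matrix (Fin 2) (Fin 2) F × Matrix (Fin 2) (Fin 2) F | IsConj (diagonal ![c, d]) y.1 ∧
        IsConj !![1, 1; 0, 1] y.2 ∧ diagonal ![a, b] * y.1 * y.2 = 1} =
      (fun p : F × F ↦
        (diagonal ![c, d] * !![1, p.1; p.2, 1].adjugate, !![1, p.1; p.2, 1])) ''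
          {p | p.1 * p.2 = 0 ∧ p ≠ 0} := by
  have hinv : diagonal ![a, b] * diagonal ![c, d] = 1 := by
    simp [diagonal_fin_two, one_fin_two, hac, hbd]
  ext ⟨N, U⟩
  constructor
  · rintro ⟨hN, hU, hprod⟩
    have hdet := (isConj_unipotent_iff.1 hU).2.2
    obtain rfl : N = diagonal ![c, d] * U.adjugate :=
      (mul_mul_eq_one_iff_eq_mul_adjugate hinv hdet).1 hprod
    obtain ⟨p, hp, rfl⟩ := (isConj_unipotent_and_trace_iff hcd).1
      ⟨hU, ((isConj_diagonal_fin_two_iff hcd).1 hN).1⟩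
    exact ⟨p, hp, rfl⟩
  · rintro ⟨p, hp, h⟩
    obtain ⟨rfl, rfl⟩ := Prod.mk.inj h
    obtain ⟨hU, htr⟩ := (isConj_unipotent_and_trace_iff hcd).2 ⟨p, hp, rfl⟩
    have hdet := (isConj_unipotent_iff.1 hU).2.2
    refine ⟨(isConj_diagonal_fin_two_iff hcd).2 ⟨htr, ?_⟩, hU,
      (mul_mul_eq_one_iff_eq_mul_adjugate hinv hdet).2 rfl⟩
    rw [det_mul, det_adjugate, hdet, one_pow, mul_one, det_diagonal, Fin.prod_univ_two]
    rfl

theorem card_isConj_pairs [Finite F] {a b c d : F} (hcd : c ≠ d) (hac : a * c = 1)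
    (hbd : b * d = 1) :
    Nat.card {y : Matrix (Fin 2) (Fin 2) F × Matrix (Fin 2) (Fin 2) F //
      IsConj (diagonal ![c, d]) y.1 ∧ IsConj !![1, 1; 0, 1] y.2 ∧
        diagonal ![a, b] * y.1 * y.2 = 1} = 2 * (Nat.card F - 1) := by
  rw [← card_mul_eq_zero_and_ne_zero, ← Set.coe_ofPred, isConj_pairs_eq_image hcd hac hbd]
  refine Nat.card_image_of_injective (fun p p' h ↦ ?_) _
  simpa [Prod.ext_iff] using (Prod.mk.inj h).2

theorem card_GL_fin_two [Finite F] :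
    (Nat.card (GL (Fin 2) F) : ℤ) =
      ((Nat.card F : ℤ) ^ 2 - 1) * ((Nat.card F : ℤ) ^ 2 - Nat.card F) := by
  have := Fintype.ofFinite F
  have hone : 1 ≤ Fintype.card F ^ 2 := Nat.one_le_pow _ _ Fintype.card_pos
  have hle : Fintype.card F ≤ Fintype.card F ^ 2 := Nat.le_self_pow two_ne_zero _
  rw [card_GL_field, Fin.prod_univ_two, Nat.card_eq_fintype_card, Fin.val_zero, Fin.val_one,
    pow_zero, pow_one]
  push_cast [hone, hle]
  rfl

theorem card_conjTriples_of_mul_eq_one [Finite F] {a b c d : F} (hab : a ≠ b) (hac : a * c = 1)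
    (hbd : b * d = 1) :
    (Nat.card (conjTriples (diagonal ![a, b]) (diagonal ![c, d]) !![1, 1; 0, 1]) : ℤ) =
      2 * ((Nat.card F : ℤ) ^ 3 - Nat.card F) := by
  have hcd : c ≠ d := by
    rintro rfl
    exact hab (mul_right_cancel₀ (right_ne_zero_of_mul_eq_one hac) (hac.trans hbd.symm))
  have hinj : Function.Injective ![a, b] := by
    simpa [Function.Injective, Fin.forall_fin_two, hab] using hab.symm
  have hclass := card_GL_fin_two (F := F)
  rw [← card_isConj_diagonal_mul hinj, Fintype.card_fin] at hclass
  have hq : 1 < Nat.card F := Finite.one_lt_card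
  have hq' : (Nat.card F : ℤ) - 1 ≠ 0 := sub_ne_zero.2 (mod_cast hq.ne')
  rw [card_conjTriples, card_isConj_pairs hcd hac hbd]
  push_cast [hq.le] at hclass ⊢
  refine mul_right_cancel₀ hq' ?_
  linear_combination 2 * hclass

end FinTwo

theorem GL2_triple_count_nongeneric_general {F : Type*} [Field F] [Finite F] {a b c d : F}
    (hab : a ≠ b) (habcd : a * b * c * d = 1)
    (hng : a * c = 1 ∨ a * d = 1 ∨ b * c = 1 ∨ b * d = 1) :
    (Nat.card (conjTriples (diagonal ![a, b]) (diagonal ![c, d]) !![1, 1; 0, 1]) : ℤ) =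
      2 * ((Nat.card F : ℤ) ^ 3 - Nat.card F) := by
  rcases hng with h | h | h | h
  · exact card_conjTriples_of_mul_eq_one hab h (by linear_combination habcd - b * d * h)
  · rw [conjTriples_congr (.refl _) (isConj_diagonal_swap c d)]
    exact card_conjTriples_of_mul_eq_one hab h (by linear_combination habcd - b * c * h)
  · rw [conjTriples_congr (isConj_diagonal_swap a b) (.refl _)]
    exact card_conjTriples_of_mul_eq_one hab.symm h (by linear_combination habcd - a * d * h)
  · rw [conjTriples_congr (isConj_diagonal_swap a b) (isConj_diagonal_swap c d)]
    exact card_conjTriples_of_mul_eq_one hab.symm h (by linear_combination habcd - a * c * h)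

/-- Genus 0, three punctures, `GL₂`, non-generic case: with `C₁, C₂` the classes of
`diag(a,b)`, `diag(c,d)` (with `abcd = 1` and `1 ∈ {ac, ad, bc, bd}`) and `C₃` the regular
unipotent class, the number of triples `(S₁,S₂,S₃) ∈ C₁ × C₂ × C₃` with `S₁S₂S₃ = 1` is
`2(q³ - q)`. -/
theorem GL2_triple_count_nongeneric
    {F : Type*} [Field F] [Fintype F] (hchar : ringChar F ≠ 2)
    (q : ℕ) (hq : q = Fintype.card F)
    (a b c d : F) (ha0 : a ≠ 0) (hb0 : b ≠ 0) (hc0 : c ≠ 0) (hd0 : d ≠ 0)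
    (hab : a ≠ b) (hcd : c ≠ d) (habcd : a * b * c * d = 1)
    (hng : a * c = 1 ∨ a * d = 1 ∨ b * c = 1 ∨ b * d = 1) :
    (Nat.card {x : Matrix (Fin 2) (Fin 2) F × Matrix (Fin 2) (Fin 2) F ×
        Matrix (Fin 2) (Fin 2) F //
        IsConj (Matrix.diagonal ![a, b]) x.1 ∧
        IsConj (Matrix.diagonal ![c, d]) x.2.1 ∧
        IsConj (!![1, 1; 0, 1] : Matrix (Fin 2) (Fin 2) F) x.2.2 ∧
        x.1 * x.2.1 * x.2.2 = 1} : ℤ) = 2 * ((q : ℤ) ^ 3 - q) := by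
  rw [hq, ← Nat.card_eq_fintype_card]
  exact GL2_triple_count_nongeneric_general hab habcd hng
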